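/- Under the stated setup and assumptions, for every j = 1,…,k the angle between the exact singular vector and the corresponding approximate singular subspace satisfies sin∠(u_j, Û) ≤ γ_j^{2q+1}·‖Ω_2Ω_1†‖₂ and sin∠(v_j, V̂) ≤ γ_j^{2q+2}·‖Ω_2Ω_1†‖₂, where u_j and v_j are the j-th columns of U_k and V_k, and sin∠(x, M) = ‖(I − MM*)x‖₂ for a unit vector x and a matrix M with orthonormal columns. -/

import Mathlib

open scoped ENNReal
open Matrix

/-- The `j`-th largest singular value (0-indexed) of a complex matrix,
obtained as the decreasingly sorted square roots of the eigenvalues of `Mᴴ * M`. -/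
noncomputable def sval {m n : ℕ} (M : Matrix (Fin m) (Fin n) ℂ) (j : ℕ) : ℝ :=
  (List.insertionSort (· ≥ ·)
    ((List.ofFn (Matrix.isHermitian_conjTranspose_mul_self M).eigenvalues).map Real.sqrt)).getD j 0

/-- The Schatten-`p` norm (`p = ∞` gives the spectral norm). -/
noncomputable def schatten {m n : ℕ} (p : ℝ≥0∞) (M : Matrix (Fin m) (Fin n) ℂ) : ℝ :=
  if p = ⊤ then sval M 0
  else (∑ j ∈ Finset.range n, sval M j ^ p.toReal) ^ (1 / p.toReal)

/-- Moore–Penrose pseudoinverse of a full-row-rank matrix. -/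
noncomputable def rpinv {a b : ℕ} (M : Matrix (Fin a) (Fin b) ℂ) : Matrix (Fin b) (Fin a) ℂ :=
  Mᴴ * (M * Mᴴ)⁻¹

/-- Rectangular diagonal matrix with entries `σ (off), σ (off+1), …` on the diagonal. -/
noncomputable def diagRect (σ : ℕ → ℝ) (off a b : ℕ) : Matrix (Fin a) (Fin b) ℂ :=
  Matrix.of fun i j => if (i : ℕ) = (j : ℕ) then (σ (off + (i : ℕ)) : ℂ) else 0

/-- The first `b` columns of a matrix with `b + c` columns. -/
def colsL {a b c : ℕ} (M : Matrix (Fin a) (Fin (b + c)) ℂ) : Matrix (Fin a) (Fin b) ℂ :=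
  M.submatrix id (Fin.castAdd c)

/-- The last `c` columns of a matrix with `b + c` columns. -/
def colsR {a b c : ℕ} (M : Matrix (Fin a) (Fin (b + c)) ℂ) : Matrix (Fin a) (Fin c) ℂ :=
  M.submatrix id (Fin.natAdd b)

/-- Euclidean norm of a complex vector. -/
noncomputable def vnorm {a : ℕ} (w : Fin a → ℂ) : ℝ :=
  Real.sqrt (∑ i, ‖w i‖ ^ 2)

/-!
Let `M = (A * Aᴴ) ^ q * A`. Since `V₁ᴴ * Ω * X = 1` for `X = Ω₁†`, the `j`-th column of `Ω * X` is
`v_j` plus a tail in the range of `V₂`, so `M` maps it to `σ_j ^ (2 * q + 1) • u_j` plus an error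
of norm at most `‖M * V₂‖ * ‖Ω₂ * Ω₁†‖`, where `‖M * V₂‖ ≤ σ_{k+1} ^ (2 * q + 1)`. The image lies
in the range of `M * Ω = Q * R`, which `1 - Q * Qᴴ` annihilates, and dividing by
`σ_j ^ (2 * q + 1)` gives the first bound. The second bound is the same argument for `Aᴴ * M`, for
which the range of `Aᴴ * M * Ω = Aᴴ * Q * R` is contained in the range of `V̂`.
-/

open WithLp (toLp)

section SingularBlock

variable {α m n k p : Type*} [Semiring α] [StarRing α] [Fintype m] [Fintype n]
  [Fintype k] [Fintype p]

/-- The columns of `U` and `V` span a pair of left and right singular subspaces of `A`, and `S` is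
the block of `A` between them. The singular values of that block need not be on the diagonal of
`S`. -/
structure IsSingularBlock (A : Matrix m n α) (U : Matrix m k α) (S : Matrix k p α)
    (V : Matrix n p α) : Prop where
  mul_right : A * V = U * S
  conjTranspose_mul_left : Aᴴ * U = V * Sᴴ

variable [DecidableEq k] {A : Matrix m n α} {U : Matrix m k α} {S : Matrix k p α}
  {V : Matrix n p α}

theorem isSingularBlock_of_eq_mul_mul_conjTranspose [DecidableEq p] (hU : Uᴴ * U = 1)
    (hV : Vᴴ * V = 1) (hA : A = U * S * Vᴴ) : IsSingularBlock A U S V where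
  mul_right := by rw [hA, Matrix.mul_assoc, hV, Matrix.mul_one]
  conjTranspose_mul_left := by
    simp only [hA, conjTranspose_mul, conjTranspose_conjTranspose, Matrix.mul_assoc, hU,
      Matrix.mul_one]

variable [DecidableEq m]

theorem IsSingularBlock.mul_conjTranspose_pow_mul (h : IsSingularBlock A U S V) (q : ℕ) :
    (A * Aᴴ) ^ q * A * V = U * ((S * Sᴴ) ^ q * S) := by
  induction q with
  | zero => simpa using h.mul_right
  | succ q ih =>
    calc (A * Aᴴ) ^ (q + 1) * A * V = A * (Aᴴ * ((A * Aᴴ) ^ q * A * V)) := by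
          rw [pow_succ']; simp only [Matrix.mul_assoc]
      _ = U * (S * (Sᴴ * ((S * Sᴴ) ^ q * S))) := by
          rw [ih, ← Matrix.mul_assoc Aᴴ, h.conjTranspose_mul_left, Matrix.mul_assoc V,
            ← Matrix.mul_assoc, h.mul_right, Matrix.mul_assoc]
      _ = U * ((S * Sᴴ) ^ (q + 1) * S) := by rw [pow_succ']; simp only [Matrix.mul_assoc]

theorem IsSingularBlock.conjTranspose_mul_pow_mul (h : IsSingularBlock A U S V) (q : ℕ) :
    Aᴴ * ((A * Aᴴ) ^ q * A) * V = V * (Sᴴ * ((S * Sᴴ) ^ q * S)) := by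
  rw [Matrix.mul_assoc, h.mul_conjTranspose_pow_mul, ← Matrix.mul_assoc,
    h.conjTranspose_mul_left, Matrix.mul_assoc]

end SingularBlock

section ConjTranspose

variable {α m n k : Type*} [Semiring α] [StarRing α] [Fintype n] [DecidableEq n]

theorem diagonal_mul_conjTranspose_pow_mul {d : n → α} (hd : IsSelfAdjoint d) (q : ℕ) :
    (diagonal d * (diagonal d)ᴴ) ^ q * diagonal d = diagonal (d ^ (2 * q + 1)) := by
  rw [diagonal_conjTranspose, hd.star_eq, ← sq, ← pow_mul, ← pow_succ, diagonal_pow]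

theorem mul_mul_conjTranspose_of_mul_conjTranspose_eq_one [Fintype k] (Q : Matrix m n α)
    {U : Matrix n k α} (hU : U * Uᴴ = 1) : Q * U * (Q * U)ᴴ = Q * Qᴴ := by
  rw [conjTranspose_mul, Matrix.mul_assoc, ← Matrix.mul_assoc U, hU, Matrix.one_mul]

variable [Fintype m]

theorem isStarProjection_mul_conjTranspose {P : Matrix m n α} (hP : Pᴴ * P = 1) :
    IsStarProjection (P * Pᴴ) where
  isIdempotentElem := by
    rw [IsIdempotentElem, Matrix.mul_assoc, ← Matrix.mul_assoc Pᴴ, hP, Matrix.one_mul]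
  isSelfAdjoint := isHermitian_mul_conjTranspose_self P

end ConjTranspose

theorem one_sub_mul_conjTranspose_mul_eq_zero {α m n k : Type*} [Ring α] [StarRing α]
    [Fintype m] [Fintype n] [DecidableEq m] [DecidableEq n] {P : Matrix m n α} (hP : Pᴴ * P = 1)
    (R : Matrix n k α) : (1 - P * Pᴴ) * (P * R) = 0 := by
  rw [← Matrix.mul_assoc, Matrix.sub_mul, Matrix.mul_assoc P, hP, Matrix.one_mul, Matrix.mul_one,
    sub_self, Matrix.zero_mul]

section OperatorNorm

open scoped Matrix.Norms.L2Operator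

variable {𝕜 m n k : Type*} [RCLike 𝕜] [Fintype m] [Fintype n] [Fintype k] [DecidableEq n]

theorem norm_toLp_col_le (M : Matrix m n 𝕜) (j : n) : ‖toLp 2 (M.col j)‖ ≤ ‖M‖ := by
  simpa [mulVec_single_one] using l2_opNorm_mulVec M (EuclideanSpace.single j 1)

theorem l2_opNorm_mul_of_conjTranspose_mul_self_eq_one [DecidableEq k] {P : Matrix m n 𝕜}
    (hP : Pᴴ * P = 1) (M : Matrix n k 𝕜) : ‖P * M‖ = ‖M‖ := by
  rw [← mul_self_inj (norm_nonneg _) (norm_nonneg _), ← l2_opNorm_conjTranspose_mul_self,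
    ← l2_opNorm_conjTranspose_mul_self, conjTranspose_mul, Matrix.mul_assoc,
    ← Matrix.mul_assoc Pᴴ, hP, Matrix.one_mul]

theorem l2_opNorm_eq_norm_eigenvalues {M : Matrix n n 𝕜} (hM : M.IsHermitian) :
    ‖M‖ = ‖hM.eigenvalues‖ := by
  conv_lhs => rw [hM.spectral_theorem, Unitary.conjStarAlgAut_apply, ← Unitary.coe_star,
    CStarRing.norm_mul_coe_unitary, CStarRing.norm_coe_unitary_mul, l2_opNorm_diagonal]
  simp [Pi.norm_def]

variable [DecidableEq m]

theorem l2_opNorm_mul_conjTranspose_pow_mul_le (S : Matrix m n 𝕜) (q : ℕ) :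
    ‖(S * Sᴴ) ^ q * S‖ ≤ ‖S‖ ^ (2 * q + 1) := by
  induction q with
  | zero => simp
  | succ q ih =>
    calc ‖(S * Sᴴ) ^ (q + 1) * S‖ = ‖S * (Sᴴ * ((S * Sᴴ) ^ q * S))‖ := by
          rw [pow_succ']; simp only [Matrix.mul_assoc]
      _ ≤ ‖S‖ * (‖Sᴴ‖ * ‖(S * Sᴴ) ^ q * S‖) :=
          (l2_opNorm_mul _ _).trans (by gcongr; exact l2_opNorm_mul _ _)
      _ ≤ ‖S‖ * (‖S‖ * ‖S‖ ^ (2 * q + 1)) := by rw [l2_opNorm_conjTranspose]; gcongr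
      _ = ‖S‖ ^ (2 * (q + 1) + 1) := by ring

theorem norm_one_sub_projection_mulVec_col_le {p l r : Type*} [Fintype p] [Fintype l] [Fintype r]
    [DecidableEq k] [DecidableEq p] [DecidableEq r] {M : Matrix m n 𝕜} {U₁ : Matrix m k 𝕜}
    {V₁ : Matrix n k 𝕜} {V₂ : Matrix n p 𝕜} {c : k → 𝕜} {t : ℝ} {Ω : Matrix n l 𝕜}
    {X : Matrix l k 𝕜} {P : Matrix m r 𝕜} {R : Matrix r l 𝕜} (hM : M * V₁ = U₁ * diagonal c)
    (hV : V₁ * V₁ᴴ + V₂ * V₂ᴴ = 1) (hX : V₁ᴴ * Ω * X = 1) (hP : Pᴴ * P = 1)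
    (hR : M * Ω = P * R) (ht : ‖M * V₂‖ ≤ t) {j : k} (hc : c j ≠ 0) :
    ‖toLp 2 ((1 - P * Pᴴ) *ᵥ U₁.col j)‖ ≤ t / ‖c j‖ * ‖V₂ᴴ * Ω * X‖ := by
  have hproj : ‖1 - P * Pᴴ‖ ≤ 1 := (isStarProjection_mul_conjTranspose hP).one_sub.norm_le
  have hsplit : M * Ω * X = U₁ * diagonal c + M * V₂ * (V₂ᴴ * Ω * X) := by
    calc M * Ω * X = M * (V₁ * V₁ᴴ + V₂ * V₂ᴴ) * Ω * X := by rw [hV, Matrix.mul_one]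
      _ = M * V₁ * (V₁ᴴ * Ω * X) + M * V₂ * (V₂ᴴ * Ω * X) := by
        simp only [Matrix.mul_add, Matrix.add_mul, Matrix.mul_assoc]
      _ = U₁ * diagonal c + M * V₂ * (V₂ᴴ * Ω * X) := by rw [hX, Matrix.mul_one, hM]
  have herr : (1 - P * Pᴴ) * (U₁ * diagonal c) = -((1 - P * Pᴴ) * (M * V₂ * (V₂ᴴ * Ω * X))) := by
    rw [eq_neg_iff_add_eq_zero, ← Matrix.mul_add, ← hsplit, ← Matrix.mul_assoc, hR,
      one_sub_mul_conjTranspose_mul_eq_zero hP, Matrix.zero_mul]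
  have hcol : ((1 - P * Pᴴ) * (U₁ * diagonal c)).col j = c j • (1 - P * Pᴴ) *ᵥ U₁.col j := by
    ext i
    simp only [← Matrix.mul_assoc, col_apply, mul_diagonal, Pi.smul_apply, smul_eq_mul, mul_comm]
    rfl
  rw [div_mul_eq_mul_div, le_div_iff₀' (norm_pos_iff.2 hc)]
  calc ‖c j‖ * ‖toLp 2 ((1 - P * Pᴴ) *ᵥ U₁.col j)‖
      = ‖toLp 2 (((1 - P * Pᴴ) * (U₁ * diagonal c)).col j)‖ := by
        rw [hcol, WithLp.toLp_smul, norm_smul]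
    _ ≤ ‖(1 - P * Pᴴ) * (M * V₂ * (V₂ᴴ * Ω * X))‖ :=
        (norm_toLp_col_le _ j).trans_eq (by rw [herr, norm_neg])
    _ ≤ ‖1 - P * Pᴴ‖ * (‖M * V₂‖ * ‖V₂ᴴ * Ω * X‖) :=
        (l2_opNorm_mul _ _).trans (by gcongr; exact l2_opNorm_mul _ _)
    _ ≤ 1 * (t * ‖V₂ᴴ * Ω * X‖) := by gcongr
    _ = t * ‖V₂ᴴ * Ω * X‖ := one_mul _

end OperatorNorm

section SingularValues

open scoped Matrix.Norms.L2Operator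

theorem isGreatest_getD_insertionSort_zero {α : Type*} [LinearOrder α] {L : List α} (hL : L ≠ [])
    (d : α) : IsGreatest {a | a ∈ L} ((L.insertionSort (· ≥ ·)).getD 0 d) := by
  have hmem (a : α) : a ∈ L.insertionSort (· ≥ ·) ↔ a ∈ L := List.mem_insertionSort (· ≥ ·)
  have hsorted := List.pairwise_insertionSort (· ≥ ·) L
  cases hsort : L.insertionSort (· ≥ ·) with
  | nil => exact absurd (hsort ▸ List.perm_insertionSort (· ≥ ·) L).nil_eq.symm hL
  | cons a t =>
    simp only [hsort, List.mem_cons] at hmem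
    rw [hsort, List.pairwise_cons] at hsorted
    refine ⟨(hmem a).1 (.inl rfl), fun b hb => ?_⟩
    rcases (hmem b).2 hb with rfl | hbt
    exacts [le_rfl, hsorted.1 b hbt]

theorem sval_zero_eq_l2_opNorm {a b : ℕ} (M : Matrix (Fin a) (Fin b) ℂ) : sval M 0 = ‖M‖ := by
  have hpos := eigenvalues_conjTranspose_mul_self_nonneg M
  have hM := l2_opNorm_eq_norm_eigenvalues (isHermitian_conjTranspose_mul_self M)
  rw [l2_opNorm_conjTranspose_mul_self, ← sq] at hM
  unfold sval
  set lam := (isHermitian_conjTranspose_mul_self M).eigenvalues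
  rcases b with _ | b
  · simp [Subsingleton.elim M 0]
  obtain ⟨hmem, hmax⟩ :=
    isGreatest_getD_insertionSort_zero (L := (List.ofFn lam).map Real.sqrt) (by simp) 0
  set s := (((List.ofFn lam).map Real.sqrt).insertionSort (· ≥ ·)).getD 0 0
  obtain ⟨x, hx, hxs⟩ := List.mem_map.1 hmem
  obtain ⟨i, rfl⟩ := List.mem_ofFn.1 hx
  have hs : 0 ≤ s := hxs ▸ Real.sqrt_nonneg _
  apply le_antisymm
  · rw [← hxs, Real.sqrt_le_left (norm_nonneg M), hM]
    exact (le_abs_self _).trans (norm_le_pi_norm lam i)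
  · rw [← sq_le_sq₀ (norm_nonneg M) hs, hM, pi_norm_le_iff_of_nonneg (sq_nonneg s)]
    intro j
    rw [Real.norm_of_nonneg (hpos j), ← Real.sqrt_le_left hs]
    exact hmax (List.mem_map_of_mem (List.mem_ofFn.2 ⟨j, rfl⟩))

theorem conjTranspose_diagRect (σ : ℕ → ℝ) (off a b : ℕ) :
    (diagRect σ off a b)ᴴ = diagRect σ off b a := by
  ext i j
  by_cases h : (i : ℕ) = j
  · simp [diagRect, h]
  · simp [diagRect, h, Ne.symm h]

theorem conjTranspose_diagRect_mul_diagRect (σ : ℕ → ℝ) (off a b : ℕ) :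
    (diagRect σ off a b)ᴴ * diagRect σ off a b =
      diagonal fun j : Fin b => if (j : ℕ) < a then (σ (off + j) : ℂ) ^ 2 else 0 := by
  ext i j
  rw [conjTranspose_diagRect, mul_apply]
  simp only [diagRect, of_apply, diagonal_apply, Fin.ext_iff]
  by_cases hi : (i : ℕ) < a
  · rw [Fintype.sum_eq_single ⟨i, hi⟩ fun l hl => by
      rw [if_neg fun h => hl (Fin.ext h.symm), zero_mul]]
    simp only [if_true, if_pos hi, mul_ite, mul_zero, sq]
  · rw [if_neg hi, ite_self]
    exact Finset.sum_eq_zero fun l _ => by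
      rw [if_neg fun h : (i : ℕ) = l => hi (h ▸ l.2), zero_mul]

theorem l2_opNorm_diagRect_le {σ : ℕ → ℝ} (hσ0 : ∀ i, 0 ≤ σ i) (hσ : Antitone σ) (off a b : ℕ) :
    ‖diagRect σ off a b‖ ≤ σ off := by
  rw [← sq_le_sq₀ (norm_nonneg _) (hσ0 off), sq, ← l2_opNorm_conjTranspose_mul_self,
    conjTranspose_diagRect_mul_diagRect, l2_opNorm_diagonal, pi_norm_le_iff_of_nonneg (sq_nonneg _)]
  intro j
  split_ifs
  · rw [norm_pow, Complex.norm_of_nonneg (hσ0 _)]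
    exact pow_le_pow_left₀ (hσ0 _) (hσ (Nat.le_add_right off j)) 2
  · simp [sq_nonneg]

end SingularValues

section Blocks

theorem vnorm_eq_norm_toLp {a : ℕ} (w : Fin a → ℂ) : vnorm w = ‖toLp 2 w‖ :=
  (EuclideanSpace.norm_eq _).symm

open scoped ComplexOrder in
theorem mul_rpinv_of_rank_eq {a b : ℕ} {M : Matrix (Fin a) (Fin b) ℂ} (hM : M.rank = a) :
    M * rpinv M = 1 := by
  have hrank : (M * Mᴴ).rank = Fintype.card (Fin a) := by
    rw [rank_self_mul_conjTranspose, hM, Fintype.card_fin]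
  have hunit : IsUnit (M * Mᴴ) := by
    rw [← linearIndependent_cols_iff_isUnit, linearIndependent_iff_card_eq_finrank_span, ← hrank]
    exact rank_eq_finrank_span_cols _
  rw [rpinv, ← Matrix.mul_assoc]
  exact mul_nonsing_inv _ ((isUnit_iff_isUnit_det _).1 hunit)

theorem mul_conjTranspose_eq_colsL_add_colsR {a b c d : ℕ} (M : Matrix (Fin a) (Fin (b + c)) ℂ)
    (N : Matrix (Fin d) (Fin (b + c)) ℂ) :
    M * Nᴴ = colsL M * (colsL N)ᴴ + colsR M * (colsR N)ᴴ := by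
  ext i j
  simp [mul_apply, Fin.sum_univ_add, colsL, colsR]

theorem conjTranspose_colsR_mul_colsR {a b c : ℕ} {M : Matrix (Fin a) (Fin (b + c)) ℂ}
    (hM : Mᴴ * M = 1) : (colsR M)ᴴ * colsR M = 1 := by
  change (Mᴴ * M).submatrix (Fin.natAdd b) (Fin.natAdd b) = 1
  rw [hM, submatrix_one _ (Fin.natAdd_injective c b)]

variable {m n k a b : ℕ}

theorem colsL_mul_diagRect (M : Matrix (Fin m) (Fin (k + a)) ℂ) (σ : ℕ → ℝ) :
    colsL (M * diagRect σ 0 (k + a) (k + b)) = colsL M * diagonal fun i : Fin k => (σ i : ℂ) := by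
  ext i j
  have hother (l : Fin (k + a)) (hl : l ≠ Fin.castAdd a j) : (l : ℕ) ≠ j :=
    fun h => hl (Fin.ext h)
  rw [mul_diagonal]
  simp only [colsL, diagRect, submatrix_apply, mul_apply, of_apply, id_eq, zero_add,
    Fin.val_castAdd]
  rw [Fintype.sum_eq_single (Fin.castAdd a j) fun l hl => by rw [if_neg (hother l hl), mul_zero]]
  simp only [Fin.val_castAdd, if_true]

theorem colsR_mul_diagRect (M : Matrix (Fin m) (Fin (k + a)) ℂ) (σ : ℕ → ℝ) :
    colsR (M * diagRect σ 0 (k + a) (k + b)) = colsR M * diagRect σ k a b := by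
  ext i j
  have hhead (l : Fin k) : (l : ℕ) ≠ k + j := by lia
  simp only [colsR, diagRect, submatrix_apply, mul_apply, of_apply, id_eq, zero_add,
    Fin.val_castAdd, Fin.val_natAdd, Fin.sum_univ_add, hhead, if_false, mul_zero,
    Finset.sum_const_zero, Nat.add_left_cancel_iff]

variable {A : Matrix (Fin m) (Fin n) ℂ} {U : Matrix (Fin m) (Fin (k + a)) ℂ}
  {V : Matrix (Fin n) (Fin (k + b)) ℂ} {σ : ℕ → ℝ}

theorem IsSingularBlock.colsL_diagRect
    (h : IsSingularBlock A U (diagRect σ 0 (k + a) (k + b)) V) :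
    IsSingularBlock A (colsL U) (diagonal fun i : Fin k => (σ i : ℂ)) (colsL V) where
  mul_right := (congrArg colsL h.mul_right).trans (colsL_mul_diagRect U σ)
  conjTranspose_mul_left := by
    have h' := congrArg colsL h.conjTranspose_mul_left
    rw [conjTranspose_diagRect, colsL_mul_diagRect] at h'
    have hσ : IsSelfAdjoint fun i : Fin k => (σ i : ℂ) := funext fun _ => Complex.conj_ofReal _
    rw [diagonal_conjTranspose, hσ.star_eq]
    exact h'

theorem IsSingularBlock.colsR_diagRect
    (h : IsSingularBlock A U (diagRect σ 0 (k + a) (k + b)) V) :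
    IsSingularBlock A (colsR U) (diagRect σ k a b) (colsR V) where
  mul_right := (congrArg colsR h.mul_right).trans (colsR_mul_diagRect U σ)
  conjTranspose_mul_left := by
    have h' := congrArg colsR h.conjTranspose_mul_left
    rw [conjTranspose_diagRect, colsR_mul_diagRect] at h'
    rwa [conjTranspose_diagRect]

end Blocks

open scoped Matrix.Norms.L2Operator in
theorem singular_vector_vs_subspace_general {𝕜 m n k m₂ n₂ l r p : Type*} [RCLike 𝕜]
    [Fintype m] [Fintype n] [Fintype k] [Fintype m₂] [Fintype n₂] [Fintype l] [Fintype r]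
    [Fintype p] [DecidableEq m] [DecidableEq n] [DecidableEq k] [DecidableEq m₂] [DecidableEq n₂]
    [DecidableEq r] [DecidableEq p] (q : ℕ)
    {A : Matrix m n 𝕜} {U₁ : Matrix m k 𝕜} {U₂ : Matrix m m₂ 𝕜} {V₁ : Matrix n k 𝕜}
    {V₂ : Matrix n n₂ 𝕜} {σ : k → ℝ} {S : Matrix m₂ n₂ 𝕜} {τ : ℝ}
    (hA₁ : IsSingularBlock A U₁ (diagonal fun i => (σ i : 𝕜)) V₁)
    (hA₂ : IsSingularBlock A U₂ S V₂)
    (hU₂ : U₂ᴴ * U₂ = 1) (hV₂ : V₂ᴴ * V₂ = 1) (hV : V₁ * V₁ᴴ + V₂ * V₂ᴴ = 1) (hS : ‖S‖ ≤ τ)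
    {Ω : Matrix n l 𝕜} {X : Matrix l k 𝕜} (hX : V₁ᴴ * Ω * X = 1)
    {Q : Matrix m r 𝕜} {R : Matrix r l 𝕜} (hQ : Qᴴ * Q = 1) (hQR : (A * Aᴴ) ^ q * A * Ω = Q * R)
    {W : Matrix n p 𝕜} {B : Matrix r p 𝕜} (hW : Wᴴ * W = 1) (hB : Qᴴ * A = B * Wᴴ)
    {j : k} (hσ : 0 < σ j) :
    ‖toLp 2 ((1 - Q * Qᴴ) *ᵥ U₁.col j)‖ ≤ (τ / σ j) ^ (2 * q + 1) * ‖V₂ᴴ * Ω * X‖ ∧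
      ‖toLp 2 ((1 - W * Wᴴ) *ᵥ V₁.col j)‖ ≤ (τ / σ j) ^ (2 * q + 2) * ‖V₂ᴴ * Ω * X‖ := by
  have hreal : IsSelfAdjoint fun i => (σ i : 𝕜) := funext fun _ => RCLike.conj_ofReal _
  have hpow : ‖(S * Sᴴ) ^ q * S‖ ≤ τ ^ (2 * q + 1) :=
    (l2_opNorm_mul_conjTranspose_pow_mul_le S q).trans (by gcongr)
  have hc (e : ℕ) : ‖(σ j : 𝕜) ^ e‖ = σ j ^ e := by
    rw [norm_pow, RCLike.norm_ofReal, abs_of_pos hσ]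
  have hc0 (e : ℕ) : (σ j : 𝕜) ^ e ≠ 0 := pow_ne_zero e (RCLike.ofReal_ne_zero.2 hσ.ne')
  rw [div_pow, div_pow, ← hc, ← hc]
  constructor
  · have hlead : (A * Aᴴ) ^ q * A * V₁ = U₁ * diagonal ((fun i => (σ i : 𝕜)) ^ (2 * q + 1)) := by
      rw [hA₁.mul_conjTranspose_pow_mul, diagonal_mul_conjTranspose_pow_mul hreal]
    have htail : ‖(A * Aᴴ) ^ q * A * V₂‖ ≤ τ ^ (2 * q + 1) := by
      rw [hA₂.mul_conjTranspose_pow_mul]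
      exact (l2_opNorm_mul_of_conjTranspose_mul_self_eq_one hU₂ _).trans_le hpow
    exact norm_one_sub_projection_mulVec_col_le hlead hV hX hQ hQR htail (hc0 _)
  · have hlead : Aᴴ * ((A * Aᴴ) ^ q * A) * V₁ =
        V₁ * diagonal ((fun i => (σ i : 𝕜)) ^ (2 * q + 2)) := by
      rw [hA₁.conjTranspose_mul_pow_mul, diagonal_mul_conjTranspose_pow_mul hreal,
        diagonal_conjTranspose, hreal.star_eq, ← diagonal_pow, ← diagonal_pow, ← pow_succ']
    have htail : ‖Aᴴ * ((A * Aᴴ) ^ q * A) * V₂‖ ≤ τ ^ (2 * q + 2) := by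
      rw [hA₂.conjTranspose_mul_pow_mul]
      calc ‖V₂ * (Sᴴ * ((S * Sᴴ) ^ q * S))‖ ≤ ‖Sᴴ‖ * ‖(S * Sᴴ) ^ q * S‖ :=
            (l2_opNorm_mul_of_conjTranspose_mul_self_eq_one hV₂ _).trans_le (l2_opNorm_mul _ _)
        _ ≤ τ * τ ^ (2 * q + 1) := by
            rw [l2_opNorm_conjTranspose]
            gcongr
            exact (norm_nonneg S).trans hS
        _ = τ ^ (2 * q + 2) := by ring
    have hrange : Aᴴ * ((A * Aᴴ) ^ q * A) * Ω = W * (Bᴴ * R) := by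
      rw [Matrix.mul_assoc, hQR, ← Matrix.mul_assoc, ← Matrix.mul_assoc]
      congr 1
      simpa using congrArg conjTranspose hB
    exact norm_one_sub_projection_mulVec_col_le hlead hV hX hW hrange htail (hc0 _)

/-- Theorem 3.6, first part: angles between exact singular vectors and the
approximate singular subspaces. -/
theorem singular_vector_vs_subspace
    {k m₂ n₂ ρ : ℕ} (q : ℕ) (hk : 1 ≤ k)
    (A : Matrix (Fin (k + m₂)) (Fin (k + n₂)) ℂ)
    (U : Matrix (Fin (k + m₂)) (Fin (k + m₂)) ℂ)
    (V : Matrix (Fin (k + n₂)) (Fin (k + n₂)) ℂ)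
    (σ : ℕ → ℝ)
    (hU : Uᴴ * U = 1) (hU' : U * Uᴴ = 1)
    (hV : Vᴴ * V = 1) (hV' : V * Vᴴ = 1)
    (hσ0 : ∀ i, 0 ≤ σ i) (hσm : ∀ i j, i ≤ j → σ j ≤ σ i)
    (hA : A = U * diagRect σ 0 (k + m₂) (k + n₂) * Vᴴ)
    (hrank : 0 < σ (k - 1)) (hgap : σ k < σ (k - 1))
    (Ω : Matrix (Fin (k + n₂)) (Fin (k + ρ)) ℂ)
    (hΩ : ((colsL V)ᴴ * Ω).rank = k)
    (Q : Matrix (Fin (k + m₂)) (Fin (k + ρ)) ℂ)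
    (R : Matrix (Fin (k + ρ)) (Fin (k + ρ)) ℂ)
    (hQ : Qᴴ * Q = 1) (hR : R.BlockTriangular id)
    (hQR : (A * Aᴴ) ^ q * A * Ω = Q * R)
    (UB : Matrix (Fin (k + ρ)) (Fin (k + ρ)) ℂ)
    (Vh : Matrix (Fin (k + n₂)) (Fin (k + ρ)) ℂ)
    (σh : ℕ → ℝ)
    (hUB : UBᴴ * UB = 1) (hUB' : UB * UBᴴ = 1)
    (hVh : Vhᴴ * Vh = 1)
    (hσh0 : ∀ i, 0 ≤ σh i) (hσhm : ∀ i j, i ≤ j → σh j ≤ σh i)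
    (hB : Qᴴ * A = UB * diagRect σh 0 (k + ρ) (k + ρ) * Vhᴴ)
    :
    ∀ j : Fin k,
      vnorm ((1 - Q * UB * (Q * UB)ᴴ) *ᵥ (fun i => colsL U i j)) ≤
          (σ k / σ (j : ℕ)) ^ (2 * q + 1) * sval ((colsR V)ᴴ * Ω * rpinv ((colsL V)ᴴ * Ω)) 0 ∧
      vnorm ((1 - Vh * Vhᴴ) *ᵥ (fun i => colsL V i j)) ≤
          (σ k / σ (j : ℕ)) ^ (2 * q + 2) * sval ((colsR V)ᴴ * Ω * rpinv ((colsL V)ᴴ * Ω)) 0 := by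
  have hanti : Antitone σ := fun _ _ => hσm _ _
  have hsvd := isSingularBlock_of_eq_mul_mul_conjTranspose hU hV hA
  simp only [mul_mul_conjTranspose_of_mul_conjTranspose_eq_one Q hUB', vnorm_eq_norm_toLp,
    sval_zero_eq_l2_opNorm]
  exact fun j => singular_vector_vs_subspace_general q hsvd.colsL_diagRect hsvd.colsR_diagRect
    (conjTranspose_colsR_mul_colsR hU) (conjTranspose_colsR_mul_colsR hV)
    ((mul_conjTranspose_eq_colsL_add_colsR V V).symm.trans hV')
    (l2_opNorm_diagRect_le hσ0 hanti k m₂ n₂) (mul_rpinv_of_rank_eq hΩ) hQ hQR hVh hB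
    (hrank.trans_le (hanti (by lia)))
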